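/- Let {G, (Γ0, Γ1), (Γ̃0, Γ̃1)} be a generalized boundary triple for the adjoint pair {S, S̃} with core {T, T̃} of {S*, S̃*}, and let B be a densely defined linear operator in G with adjoint B*. Then A_B ⊆ (Ã_{B*})* and Ã_{B*} ⊆ (A_B)*; in particular, (A_B f, g)_H = (f, Ã_{B*} g)_H holds for all f ∈ dom A_B and all g ∈ dom Ã_{B*}. -/

import Mathlib

/-!
For `f ∈ dom A_B` and `g ∈ dom Ã_{B*}` the right-hand side of the Green identity is
`(Γ1 f, B* Γ̃1 g) - (B Γ1 f, Γ̃1 g) = 0`, so `A_B` and `Ã_{B*}` are formal adjoints of each other.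

Mathlib's `LinearPMap.adjoint` vanishes on its domain when the operator is not densely defined, so
the inclusions into the adjoints also need `A_B` and `Ã_{B*}` to be densely defined. This holds
because they extend `S̃` and `S` respectively: `S = T* ⊆ A0* = Ã0 ⊆ T̃`, and for `g ∈ dom S` the Green
identity reduces to `(Γ0 f, Γ̃1 g) = 0` for all `f ∈ dom T`, so that `Γ̃1 g = 0` by surjectivity of
`Γ0` (`IsGeneralizedBoundaryTriple.boundary_values_eq_zero`). The statement for `S̃` follows by
exchanging the roles of the two operators (`IsGeneralizedBoundaryTriple.symm`). That `T` is densely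
defined is itself a consequence of `A0* = Ã0` and `Ã0* = A0` (`dense_of_adjoint_eq`).
-/

open scoped ComplexInnerProductSpace

noncomputable section

/-- The inner product in the convention of the paper: linear in the *first* argument and
conjugate-linear in the second (the opposite of Mathlib's convention). -/
def pinner {E : Type*} [NormedAddCommGroup E] [InnerProductSpace ℂ E] (x y : E) : ℂ :=
  ⟪y, x⟫

variable {H G : Type*}
  [NormedAddCommGroup H] [InnerProductSpace ℂ H] [CompleteSpace H]
  [NormedAddCommGroup G] [InnerProductSpace ℂ G] [CompleteSpace G]

/-- The restriction of a partially defined linear operator `T` in `H` to a submodule `p` of its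
domain, viewed again as a partially defined linear operator in `H`. -/
def LinearPMap.restrictTo (T : H →ₗ.[ℂ] H) (p : Submodule ℂ T.domain) : H →ₗ.[ℂ] H where
  domain := p.map T.domain.subtype
  toFun := T.toFun ∘ₗ p.subtype ∘ₗ
    (Submodule.equivMapOfInjective T.domain.subtype (Submodule.injective_subtype _)
      p).symm.toLinearMap

/-- `R` is the (everywhere defined, bounded) resolvent of the operator `A` at the point `lam`,
i.e. `R` is a two-sided inverse of `A - lam`. -/
def ResolventAt (A : H →ₗ.[ℂ] H) (lam : ℂ) (R : H →L[ℂ] H) : Prop :=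
  (∀ x : A.domain, R (A x - lam • (x : H)) = (x : H)) ∧
  (∀ h : H, ∃ x : A.domain, (x : H) = R h ∧ A x - lam • (x : H) = h)

/-- `lam` belongs to the resolvent set of `A`: `A - lam` is a bijection of `dom A` onto `H`
with a bounded everywhere defined inverse. -/
def InResolventSet (A : H →ₗ.[ℂ] H) (lam : ℂ) : Prop :=
  ∃ R : H →L[ℂ] H, ResolventAt A lam R

/-- `{G, (Γ0, Γ1), (Γt0, Γt1)}` is a generalized boundary triple for the adjoint pair `{S, St}`
with core `{T, Tt}` of `{S*, St*}`. -/
structure IsGeneralizedBoundaryTriple (S St T Tt : H →ₗ.[ℂ] H)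
    (Γ0 Γ1 : T.domain →ₗ[ℂ] G) (Γt0 Γt1 : Tt.domain →ₗ[ℂ] G) : Prop where
  dense_S : Dense (S.domain : Set H)
  dense_St : Dense (St.domain : Set H)
  closed_S : S.IsClosed
  closed_St : St.IsClosed
  adjoint_pair : ∀ (f : S.domain) (g : St.domain),
    pinner (S f) (g : H) = pinner (f : H) (St g)
  T_le : T ≤ S.adjoint
  Tt_le : Tt ≤ St.adjoint
  T_adjoint : T.adjoint = S
  Tt_adjoint : Tt.adjoint = St
  green : ∀ (f : T.domain) (g : Tt.domain),
    pinner (T f) (g : H) - pinner (f : H) (Tt g)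
      = pinner (Γ1 f) (Γt0 g) - pinner (Γ0 f) (Γt1 g)
  surj_Γ0 : Function.Surjective Γ0
  surj_Γt0 : Function.Surjective Γt0
  A0_adjoint : (T.restrictTo (LinearMap.ker Γ0)).adjoint = Tt.restrictTo (LinearMap.ker Γt0)
  At0_adjoint : (Tt.restrictTo (LinearMap.ker Γt0)).adjoint = T.restrictTo (LinearMap.ker Γ0)

theorem LinearPMap.mem_restrictTo {T : H →ₗ.[ℂ] H} {p : Submodule ℂ T.domain} {x : H} :
    x ∈ (T.restrictTo p).domain ↔ ∃ y ∈ p, (y : H) = x := Iff.rfl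

theorem LinearPMap.restrictTo_apply (T : H →ₗ.[ℂ] H) (p : Submodule ℂ T.domain)
    (x : (T.restrictTo p).domain) : ∃ y ∈ p, (y : H) = x ∧ T.restrictTo p x = T y := by
  let e := Submodule.equivMapOfInjective T.domain.subtype (Submodule.injective_subtype _) p
  refine ⟨e.symm x, (e.symm x).2, ?_, rfl⟩
  exact congrArg Subtype.val (e.apply_symm_apply x)

/-- Two operators that are adjoint to each other are densely defined, also with the convention that
the adjoint of a non-densely defined operator is zero on its domain: if `dom A` were not dense, then
`C = A*` would be a zero operator, so `A = C*` would be everywhere defined. -/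
theorem dense_of_adjoint_eq {A C : H →ₗ.[ℂ] H} (hA : A.adjoint = C) (hC : C.adjoint = A) :
    Dense (A.domain : Set H) := by
  by_contra h
  have hzero : ∀ x : C.domain, C x = 0 := by
    subst hA
    exact LinearPMap.adjoint_apply_of_not_dense h
  refine h fun y => subset_closure ?_
  rw [← hC]
  exact LinearPMap.mem_adjoint_domain_of_exists y ⟨0, fun x => by simp [hzero]⟩

/-- The definition of a generalized boundary triple is symmetric under exchanging the two operators
of the adjoint pair together with their cores and boundary maps. -/
theorem IsGeneralizedBoundaryTriple.symm {S St T Tt : H →ₗ.[ℂ] H}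
    {Γ0 Γ1 : T.domain →ₗ[ℂ] G} {Γt0 Γt1 : Tt.domain →ₗ[ℂ] G}
    (h : IsGeneralizedBoundaryTriple S St T Tt Γ0 Γ1 Γt0 Γt1) :
    IsGeneralizedBoundaryTriple St S Tt T Γt0 Γt1 Γ0 Γ1 where
  dense_S := h.dense_St
  dense_St := h.dense_S
  closed_S := h.closed_St
  closed_St := h.closed_S
  adjoint_pair f g := by
    have := congrArg (starRingEnd ℂ) (h.adjoint_pair g f)
    simp only [pinner, inner_conj_symm] at this ⊢
    exact this.symm
  T_le := h.Tt_le
  Tt_le := h.T_le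
  T_adjoint := h.Tt_adjoint
  Tt_adjoint := h.T_adjoint
  green f g := by
    have := congrArg (starRingEnd ℂ) (h.green g f)
    simp only [pinner, map_sub, inner_conj_symm] at this ⊢
    linear_combination -this
  surj_Γ0 := h.surj_Γt0
  surj_Γt0 := h.surj_Γ0
  A0_adjoint := h.At0_adjoint
  At0_adjoint := h.A0_adjoint

/-- The domain of `S` is contained in that of `T̃`, and both `Γ̃0` and `Γ̃1` vanish on it. -/
theorem IsGeneralizedBoundaryTriple.boundary_values_eq_zero {S St T Tt : H →ₗ.[ℂ] H}
    {Γ0 Γ1 : T.domain →ₗ[ℂ] G} {Γt0 Γt1 : Tt.domain →ₗ[ℂ] G}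
    (h : IsGeneralizedBoundaryTriple S St T Tt Γ0 Γ1 Γt0 Γt1) (g : S.domain) :
    ∃ k : Tt.domain, (k : H) = g ∧ Γt0 k = 0 ∧ Γt1 k = 0 := by
  have hA0 := dense_of_adjoint_eq h.A0_adjoint h.At0_adjoint
  have hT : Dense (T.domain : Set H) := hA0.mono fun x hx => by
    obtain ⟨y, -, rfl⟩ := LinearPMap.mem_restrictTo.1 hx
    exact y.2
  have hST : S.IsFormalAdjoint T := by
    have := LinearPMap.adjoint_isFormalAdjoint hT
    rwa [h.T_adjoint] at this
  have hle : S ≤ Tt.restrictTo (LinearMap.ker Γt0) := by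
    rw [← h.A0_adjoint]
    refine LinearPMap.IsFormalAdjoint.le_adjoint hA0 fun x y => ?_
    obtain ⟨f, -, hf, hfT⟩ := LinearPMap.restrictTo_apply _ _ x
    rw [hfT, ← hf]
    exact hST.symm f y
  obtain ⟨k, hk, hkg, hkT⟩ := LinearPMap.restrictTo_apply _ _ (⟨g, hle.1 g.2⟩ :
    (Tt.restrictTo (LinearMap.ker Γt0)).domain)
  have hval : S g = Tt k := (hle.2 rfl).trans hkT
  refine ⟨k, hkg, hk, ?_⟩
  obtain ⟨f, hf⟩ := h.surj_Γ0 (Γt1 k)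
  have hgreen := h.green f k
  have hformal := hST g f
  have hk0 : Γt0 k = 0 := hk
  simp only [pinner, hk0, hf, inner_zero_left, zero_sub] at hgreen
  rw [hval, ← hkg] at hformal
  rw [hformal, sub_self] at hgreen
  exact inner_self_eq_zero.1 (neg_eq_zero.1 hgreen.symm)

/-- A restriction of `T̃` defined by a linear relation between the boundary values is densely
defined, since its domain contains that of `S`. -/
theorem IsGeneralizedBoundaryTriple.dense_restrictTo {S St T Tt : H →ₗ.[ℂ] H}
    {Γ0 Γ1 : T.domain →ₗ[ℂ] G} {Γt0 Γt1 : Tt.domain →ₗ[ℂ] G}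
    (h : IsGeneralizedBoundaryTriple S St T Tt Γ0 Γ1 Γt0 Γt1) (p : Submodule ℂ (G × G)) :
    Dense ((Tt.restrictTo (Submodule.comap (Γt1.prod Γt0) p)).domain : Set H) := by
  refine h.dense_S.mono fun x hx => ?_
  obtain ⟨k, hk, h0, h1⟩ := h.boundary_values_eq_zero ⟨x, hx⟩
  refine LinearPMap.mem_restrictTo.2 ⟨k, ?_, hk⟩
  have hz : (Γt1.prod Γt0) k = 0 := by simp [h0, h1]
  rw [Submodule.mem_comap, hz]
  exact p.zero_mem

theorem stmt14
    (S St T Tt : H →ₗ.[ℂ] H)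
    (Γ0 Γ1 : T.domain →ₗ[ℂ] G) (Γt0 Γt1 : Tt.domain →ₗ[ℂ] G)
    (hgbt : IsGeneralizedBoundaryTriple S St T Tt Γ0 Γ1 Γt0 Γt1)
    (B : G →ₗ.[ℂ] G) (hB : Dense ((B.domain : Submodule ℂ G) : Set G)) :
    T.restrictTo (Submodule.comap (Γ1.prod Γ0) B.graph)
      ≤ (Tt.restrictTo (Submodule.comap (Γt1.prod Γt0) B.adjoint.graph)).adjoint ∧
    Tt.restrictTo (Submodule.comap (Γt1.prod Γt0) B.adjoint.graph)
      ≤ (T.restrictTo (Submodule.comap (Γ1.prod Γ0) B.graph)).adjoint ∧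
    (∀ (f : T.domain) (g : Tt.domain),
      (Γ1 f, Γ0 f) ∈ B.graph → (Γt1 g, Γt0 g) ∈ B.adjoint.graph →
      pinner (T f) (g : H) = pinner (f : H) (Tt g)) := by
  have key : ∀ (f : T.domain) (g : Tt.domain),
      (Γ1 f, Γ0 f) ∈ B.graph → (Γt1 g, Γt0 g) ∈ B.adjoint.graph →
      pinner (T f) (g : H) = pinner (f : H) (Tt g) := by
    intro f g hf hg
    obtain ⟨u, hu1, hu0⟩ := (LinearPMap.mem_graph_iff _).1 hf
    obtain ⟨v, hv1, hv0⟩ := (LinearPMap.mem_graph_iff _).1 hg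
    dsimp only at hu1 hu0 hv1 hv0
    have hgreen := hgbt.green f g
    have hadj := LinearPMap.adjoint_isFormalAdjoint hB v u
    rw [hu1, hu0, hv1, hv0] at hadj
    refine sub_eq_zero.1 (hgreen.trans ?_)
    simp only [pinner, hadj, sub_self]
  have hformal : (Tt.restrictTo (Submodule.comap (Γt1.prod Γt0) B.adjoint.graph)).IsFormalAdjoint
      (T.restrictTo (Submodule.comap (Γ1.prod Γ0) B.graph)) := by
    intro x y
    obtain ⟨g, hg, hgx, hgT⟩ := LinearPMap.restrictTo_apply _ _ x
    obtain ⟨f, hf, hfy, hfT⟩ := LinearPMap.restrictTo_apply _ _ y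
    rw [hgT, hfT, ← hgx, ← hfy]
    exact (key f g hf hg).symm
  exact ⟨LinearPMap.IsFormalAdjoint.le_adjoint (hgbt.dense_restrictTo _) hformal,
    LinearPMap.IsFormalAdjoint.le_adjoint (hgbt.symm.dense_restrictTo _) hformal.symm, key⟩

end
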